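/- arXiv:2008.10044 — 2 statements merged into one kernel-verified Lean document; each statement's English description precedes it below -/
import Mathlib

section
/- Let A be an artin algebra and M a finitely generated A-module. If there exists a (not necessarily finitely generated) A-module N of finite injective dimension d ≥ 1 such that Ext^d(M,N) ≠ 0, then d ≤ del M. -/
open CategoryTheory CategoryTheory.Limits

noncomputable section

namespace ArtinAlg

variable (A : Type) [Ring A]

/-- `M` admits a projective resolution of length at most `n`. -/
inductive ProjDimLE : ℕ → ModuleCat.{0} A → Prop
  | zero (M : ModuleCat.{0} A) (h : Projective M) : ProjDimLE 0 M
  | succ (n : ℕ) (M P : ModuleCat.{0} A) (f : P ⟶ M) (hP : Projective P) (hf : Epi f)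
      (h : ProjDimLE n (kernel f)) : ProjDimLE (n + 1) M

/-- `M` admits an injective coresolution of length at most `n`. -/
inductive InjDimLE : ℕ → ModuleCat.{0} A → Prop
  | zero (M : ModuleCat.{0} A) (h : Injective M) : InjDimLE 0 M
  | succ (n : ℕ) (M I : ModuleCat.{0} A) (f : M ⟶ I) (hI : Injective I) (hf : Mono f)
      (h : InjDimLE n (cokernel f)) : InjDimLE (n + 1) M

/-- The projective dimension `pd M ∈ ℕ∞`. -/
def projDim (M : ModuleCat.{0} A) : ℕ∞ :=
  sInf {d : ℕ∞ | ∃ n : ℕ, d = n ∧ ProjDimLE A n M}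

/-- The injective dimension `id M ∈ ℕ∞`. -/
def injDim (M : ModuleCat.{0} A) : ℕ∞ :=
  sInf {d : ℕ∞ | ∃ n : ℕ, d = n ∧ InjDimLE A n M}

/-- `f : P ⟶ M` is a projective cover: `P` is projective and `f` is an essential
(superfluous) epimorphism. -/
def IsProjectiveCoverHom {P M : ModuleCat.{0} A} (f : P ⟶ M) : Prop :=
  Projective P ∧ Epi f ∧ ∀ (N : ModuleCat.{0} A) (g : N ⟶ P), Epi (g ≫ f) → Epi g

/-- `P` is a projective cover of `M`. -/
def IsProjCoverOf (M P : ModuleCat.{0} A) : Prop :=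
  ∃ f : P ⟶ M, IsProjectiveCoverHom A f

/-- `f : M ⟶ I` is an injective envelope: `I` is injective and `f` is an essential
monomorphism. -/
def IsInjectiveEnvelopeHom {M I : ModuleCat.{0} A} (f : M ⟶ I) : Prop :=
  Injective I ∧ Mono f ∧ ∀ (N : ModuleCat.{0} A) (g : I ⟶ N), Mono (f ≫ g) → Mono g

/-- `I` is an injective envelope of `M`. -/
def IsInjEnvOf (M I : ModuleCat.{0} A) : Prop :=
  ∃ f : M ⟶ I, IsInjectiveEnvelopeHom A f

/-- `X ≅ Ω M`, the kernel of a projective cover of `M`. -/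
def IsSyzygyOf (M X : ModuleCat.{0} A) : Prop :=
  ∃ (P : ModuleCat.{0} A) (f : P ⟶ M), IsProjectiveCoverHom A f ∧ Nonempty (X ≅ kernel f)

/-- `X ≅ Σ M`, the cokernel of an injective envelope of `M`. -/
def IsCosyzygyOf (M X : ModuleCat.{0} A) : Prop :=
  ∃ (I : ModuleCat.{0} A) (f : M ⟶ I), IsInjectiveEnvelopeHom A f ∧ Nonempty (X ≅ cokernel f)

/-- `X ≅ Ω^n M`. -/
def IsNthSyzygy : ℕ → ModuleCat.{0} A → ModuleCat.{0} A → Prop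
  | 0, M, X => Nonempty (X ≅ M)
  | n + 1, M, X => ∃ Y, IsSyzygyOf A M Y ∧ IsNthSyzygy n Y X

/-- `X ≅ Σ^n M`. -/
def IsNthCosyzygy : ℕ → ModuleCat.{0} A → ModuleCat.{0} A → Prop
  | 0, M, X => Nonempty (X ≅ M)
  | n + 1, M, X => ∃ Y, IsCosyzygyOf A M Y ∧ IsNthCosyzygy n Y X

/-- `X` is a direct summand of `Y`. -/
def IsDirectSummandOf (X Y : ModuleCat.{0} A) : Prop :=
  ∃ (i : X ⟶ Y) (r : Y ⟶ X), i ≫ r = 𝟙 X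

/-- `X ∈ add W` : `X` is a direct summand of a finite direct sum of copies of `W`. -/
def InAdd (X W : ModuleCat.{0} A) : Prop :=
  ∃ n : ℕ, IsDirectSummandOf A X (ModuleCat.of A (Fin n → ↥W))

/-- The delooping level of `M` is at most `d` :
`Ω^d M ∈ add (A ⊕ Ω^{d+1} M')` for some finitely generated `M'`. -/
def DelLE (d : ℕ) (M : ModuleCat.{0} A) : Prop :=
  ∃ X, IsNthSyzygy A d M X ∧
    ∃ M' : ModuleCat.{0} A, Module.Finite A ↥M' ∧
      ∃ X', IsNthSyzygy A (d + 1) M' X' ∧ InAdd A X (ModuleCat.of A (A × ↥X'))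

/-- The delooping level `del M ∈ ℕ∞`. -/
def delLevel (M : ModuleCat.{0} A) : ℕ∞ :=
  sInf {d : ℕ∞ | ∃ n : ℕ, d = n ∧ DelLE A n M}

/-- The delooping level of the algebra: the supremum of `del S` over the simple modules. -/
def delAlg : ℕ∞ :=
  sSup {d : ℕ∞ | ∃ S : ModuleCat.{0} A, IsSimpleModule A ↥S ∧ delLevel A S = d}

/-- `Q` is a minimal injective cogenerator: the injective envelope of the direct sum of
a complete set of representatives of the simple modules. -/
def IsMinimalInjectiveCogenerator (Q : ModuleCat.{0} A) : Prop :=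
  ∃ (ι : Type) (_ : Fintype ι) (S : ι → ModuleCat.{0} A),
    (∀ i, IsSimpleModule A ↥(S i)) ∧
    (∀ T : ModuleCat.{0} A, IsSimpleModule A ↥T → ∃! i, Nonempty (↥T ≃ₗ[A] ↥(S i))) ∧
    IsInjEnvOf A (ModuleCat.of A (∀ i, ↥(S i))) Q

/-- The desuspending level of `M` is at most `d` :
`Σ^d M ∈ add (D(A) ⊕ Σ^{d+1} M')` for some finitely generated `M'`. -/
def DesLE (d : ℕ) (M : ModuleCat.{0} A) : Prop :=
  ∃ X, IsNthCosyzygy A d M X ∧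
    ∃ Q, IsMinimalInjectiveCogenerator A Q ∧
      ∃ M' : ModuleCat.{0} A, Module.Finite A ↥M' ∧
        ∃ X', IsNthCosyzygy A (d + 1) M' X' ∧ InAdd A X (ModuleCat.of A (↥Q × ↥X'))

/-- The desuspending level `des M ∈ ℕ∞`. -/
def desLevel (M : ModuleCat.{0} A) : ℕ∞ :=
  sInf {d : ℕ∞ | ∃ n : ℕ, d = n ∧ DesLE A n M}

/-- The desuspending level of the algebra. -/
def desAlg : ℕ∞ :=
  sSup {d : ℕ∞ | ∃ S : ModuleCat.{0} A, IsSimpleModule A ↥S ∧ desLevel A S = d}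

/-- The (small) finitistic projective dimension `fin-pro A`. -/
def finProDim : ℕ∞ :=
  sSup {d : ℕ∞ | ∃ M : ModuleCat.{0} A, Module.Finite A ↥M ∧ projDim A M = d ∧ d ≠ ⊤}

/-- The (small) finitistic injective dimension `fin-inj A`. -/
def finInjDim : ℕ∞ :=
  sSup {d : ℕ∞ | ∃ M : ModuleCat.{0} A, Module.Finite A ↥M ∧ injDim A M = d ∧ d ≠ ⊤}

/-- The big finitistic projective dimension `Fin-pro A`. -/
def bigFinProDim : ℕ∞ :=
  sSup {d : ℕ∞ | ∃ M : ModuleCat.{0} A, projDim A M = d ∧ d ≠ ⊤}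

/-- The big finitistic injective dimension `Fin-inj A`. -/
def bigFinInjDim : ℕ∞ :=
  sSup {d : ℕ∞ | ∃ M : ModuleCat.{0} A, injDim A M = d ∧ d ≠ ⊤}

/-- `M` is an indecomposable nonzero module. -/
def Indec (M : ModuleCat.{0} A) : Prop :=
  Nontrivial ↥M ∧ ∀ (N₁ N₂ : Submodule A ↥M), IsCompl N₁ N₂ → N₁ = ⊥ ∨ N₂ = ⊥

/-- `M` is serial (uniserial): its submodules form a chain. -/
def IsUniserial (M : ModuleCat.{0} A) : Prop :=
  ∀ N₁ N₂ : Submodule A ↥M, N₁ ≤ N₂ ∨ N₂ ≤ N₁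

/-- `A` is a Nakayama algebra: all finitely generated indecomposable modules are serial. -/
def IsNakayama : Prop :=
  ∀ M : ModuleCat.{0} A, Module.Finite A ↥M → Indec A M → IsUniserial A M

/-- `A` is connected: it is not a nontrivial product of algebras. -/
def IsConnectedAlgebra : Prop :=
  Nontrivial A ∧ ∀ e : A, IsIdempotentElem e → e ∈ Set.center A → e = 0 ∨ e = 1

/-- `A` is a cyclic Nakayama algebra: connected Nakayama with no simple projective module. -/
def IsCyclicNakayama : Prop :=
  IsNakayama A ∧ IsConnectedAlgebra A ∧
    ¬ ∃ S : ModuleCat.{0} A, IsSimpleModule A ↥S ∧ Projective S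

/-- `T ≅ top M` (and `top M` is simple): there is an essential epimorphism `M ⟶ T`. -/
def IsSimpleTopOf (M T : ModuleCat.{0} A) : Prop :=
  IsSimpleModule A ↥T ∧
    ∃ f : M ⟶ T, Epi f ∧ ∀ (N : ModuleCat.{0} A) (g : N ⟶ M), Epi (g ≫ f) → Epi g

/-- `S ≅ soc M` (and `soc M` is simple): there is an essential monomorphism `S ⟶ M`. -/
def IsSimpleSocOf (M S : ModuleCat.{0} A) : Prop :=
  IsSimpleModule A ↥S ∧
    ∃ f : S ⟶ M, Mono f ∧ ∀ (N : ModuleCat.{0} A) (g : M ⟶ N), Mono (f ≫ g) → Mono g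

/-- `0 ⟶ N ⟶ E ⟶ M ⟶ 0` is an almost split (Auslander-Reiten) sequence. -/
def IsAlmostSplitSeq {N E M : ModuleCat.{0} A} (f : N ⟶ E) (g : E ⟶ M) : Prop :=
  Mono f ∧ Epi g ∧ (∃ w : f ≫ g = 0, (ShortComplex.mk f g w).Exact) ∧
  (¬ ∃ s : M ⟶ E, s ≫ g = 𝟙 M) ∧ Indec A N ∧ Indec A M ∧
  ∀ (X : ModuleCat.{0} A) (h : X ⟶ M), (¬ ∃ s : M ⟶ X, s ≫ h = 𝟙 M) → ∃ h' : X ⟶ E, h' ≫ g = h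

/-- `N ≅ τ M`, the Auslander-Reiten translate of `M` : there is an almost split sequence
`0 ⟶ N ⟶ E ⟶ M ⟶ 0`. -/
def IsTauOf (N M : ModuleCat.{0} A) : Prop :=
  ∃ (E : ModuleCat.{0} A) (f : N ⟶ E) (g : E ⟶ M), IsAlmostSplitSeq A f g

/-- `U ≅ ψ S = τ⁻ top (I S)`. -/
def IsPsiOf (S U : ModuleCat.{0} A) : Prop :=
  ∃ I, IsInjEnvOf A S I ∧ ∃ T, IsSimpleTopOf A I T ∧ IsTauOf A T U

/-- `T ≅ γ S = τ soc (P S)`. -/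
def IsGammaOf (S T : ModuleCat.{0} A) : Prop :=
  ∃ P, IsProjCoverOf A S P ∧ ∃ U, IsSimpleSocOf A P U ∧ IsTauOf A T U

/-- `T ≅ φ S = top (I S)`. -/
def IsPhiOf (S T : ModuleCat.{0} A) : Prop :=
  ∃ I, IsInjEnvOf A S I ∧ IsSimpleTopOf A I T

/-- There is a `ψ`-path `(S_1, …, S_m)` of cardinality `m` ending in `S`. -/
def PsiPathTo (m : ℕ) (S : ModuleCat.{0} A) : Prop :=
  1 ≤ m ∧ ∃ c : ℕ → ModuleCat.{0} A,
    (∀ i < m, IsSimpleModule A ↥(c i)) ∧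
    (∀ i, i + 1 < m → IsPsiOf A (c i) (c (i + 1))) ∧
    Nonempty (c (m - 1) ≅ S)

/-- `a(S)`: the supremum of the cardinalities of `ψ`-paths ending in `S`. -/
def aVal (S : ModuleCat.{0} A) : ℕ∞ :=
  sSup {d : ℕ∞ | ∃ m : ℕ, d = m ∧ PsiPathTo A m S}

/-- `a(A)`: the maximum of `a(S)` over the simple modules which are not `ψ`-cyclic. -/
def aAlg : ℕ∞ :=
  sSup {d : ℕ∞ | ∃ S : ModuleCat.{0} A, IsSimpleModule A ↥S ∧ aVal A S ≠ ⊤ ∧ aVal A S = d}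

/-- `S` is a composition factor of `M`: a simple subquotient of `M`. -/
def IsCompFactorOf (S M : ModuleCat.{0} A) : Prop :=
  IsSimpleModule A ↥S ∧ ∃ N' N : Submodule A ↥M, N' ≤ N ∧
    Nonempty ((↥N ⧸ N'.comap N.subtype) ≃ₗ[A] ↥S)

/-- `e(S) = min {pd S, pd (I S)} = x`. -/
def ERelVal (S : ModuleCat.{0} A) (x : ℕ∞) : Prop :=
  ∃ I, IsInjEnvOf A S I ∧ x = min (projDim A S) (projDim A I)

/-- `e*(S) = min {id S, id (P S)} = x`. -/
def EStarVal (S : ModuleCat.{0} A) (x : ℕ∞) : Prop :=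
  ∃ P, IsProjCoverOf A S P ∧ x = min (injDim A S) (injDim A P)

/-- `T = h(S) = top (Ω^{e(S)} N S)`, the homological permutation. -/
def HRel (S T : ModuleCat.{0} A) : Prop :=
  IsSimpleModule A ↥S ∧ IsSimpleModule A ↥T ∧
  ∃ z : ℕ, ERelVal A S z ∧
    ∃ N, ((Odd z ∧ N = S) ∨ (Even z ∧ IsInjEnvOf A S N)) ∧
      ∃ X, IsNthSyzygy A z N X ∧ IsSimpleTopOf A X T

/-- `S = h*(T) = soc (Σ^{e*(T)} N* T)`, the inverse homological permutation. -/
def HStarRel (T S : ModuleCat.{0} A) : Prop :=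
  IsSimpleModule A ↥T ∧ IsSimpleModule A ↥S ∧
  ∃ z : ℕ, EStarVal A T z ∧
    ∃ N, ((Odd z ∧ N = T) ∨ (Even z ∧ IsProjCoverOf A T N)) ∧
      ∃ X, IsNthCosyzygy A z N X ∧ IsSimpleSocOf A X S

/-- The `t`-fold relational iterate of a relation on modules (up to isomorphism). -/
def IterRel (r : ModuleCat.{0} A → ModuleCat.{0} A → Prop) :
    ℕ → ModuleCat.{0} A → ModuleCat.{0} A → Prop
  | 0, X, Y => Nonempty (X ≅ Y)
  | n + 1, X, Y => ∃ Z, r X Z ∧ IterRel r n Z Y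

end ArtinAlg

/-!
Suppose `Ω^n M` is a direct summand of `(A ⊕ Ω^{n+1} M')^m` for some `n < d`. Dimension shifting
identifies `Ext^d(M, N)` with `Ext^{d-n}(Ω^n M, N)`, which is a direct summand of
`Ext^{d-n}(A ⊕ Ω^{n+1} M', N)^m`. As `d - n ≥ 1`, the projective module `A` contributes nothing, and
shifting back turns the other term into `Ext^{d+1}(M', N) = 0`; so `Ext^d(M, N) = 0`.
-/

namespace ArtinAlg

section AbelianCategory

universe w v u

variable {C : Type u} [Category.{v} C] [Abelian C]

section Vanishing

variable [HasExt.{w} C] {X Y N : C} {n : ℕ}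

lemma subsingleton_ext_of_retract (h : Retract X Y) [Subsingleton (Abelian.Ext Y N n)] :
    Subsingleton (Abelian.Ext X N n) := by
  refine subsingleton_of_forall_eq 0 fun e ↦ ?_
  calc e = (Abelian.Ext.mk₀ h.i).comp ((Abelian.Ext.mk₀ h.r).comp e (zero_add n)) (zero_add n) := by
        rw [Abelian.Ext.mk₀_comp_mk₀_assoc, h.retract, Abelian.Ext.mk₀_id_comp]
    _ = 0 := by rw [Subsingleton.elim (Abelian.Ext.comp _ e _) 0, Abelian.Ext.comp_zero]

lemma subsingleton_ext_iff_of_iso (e : X ≅ Y) :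
    Subsingleton (Abelian.Ext X N n) ↔ Subsingleton (Abelian.Ext Y N n) :=
  ⟨fun _ ↦ subsingleton_ext_of_retract (.ofIso e.symm),
    fun _ ↦ subsingleton_ext_of_retract (.ofIso e)⟩

lemma subsingleton_ext_X₃_iff_X₁ {S : ShortComplex C} (hS : S.ShortExact) [Projective S.X₂] :
    Subsingleton (Abelian.Ext S.X₃ N (n + 2)) ↔ Subsingleton (Abelian.Ext S.X₁ N (n + 1)) := by
  constructor <;> refine fun _ ↦ subsingleton_of_forall_eq 0 fun e ↦ ?_
  · obtain ⟨e', rfl⟩ := Abelian.Ext.contravariant_sequence_exact₁ hS N e (n₁ := n + 2)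
      (by lia) (Subsingleton.elim _ _)
    rw [e'.eq_zero_of_projective, Abelian.Ext.comp_zero]
  · obtain ⟨e', rfl⟩ := Abelian.Ext.contravariant_sequence_exact₃ hS N e
      (Abelian.Ext.eq_zero_of_projective _) (n₀ := n + 1) (by lia)
    rw [Subsingleton.elim e' 0, Abelian.Ext.comp_zero]

end Vanishing

lemma subsingleton_derived_ext_succ_iff {R : Type*} [Ring R] [Linear R C] [EnoughProjectives C]
    [HasExt.{w} C] (X Y : C) (n : ℕ) :
    Subsingleton (((Ext R C (n + 1)).obj (Opposite.op X)).obj Y) ↔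
      Subsingleton (Abelian.Ext X Y (n + 1)) := by
  let P := projectiveResolution X
  have exact_iff : Subsingleton (((Ext R C (n + 1)).obj (Opposite.op X)).obj Y) ↔
      ∀ f : P.complex.X (n + 1) ⟶ Y, P.complex.d (n + 2) (n + 1) ≫ f = 0 →
        ∃ g : P.complex.X n ⟶ Y, P.complex.d (n + 1) n ≫ g = f := by
    rw [← ModuleCat.isZero_iff_subsingleton, (P.isoExt (n + 1) Y).isZero_iff,
      ← HomologicalComplex.exactAt_iff_isZero_homology,
      HomologicalComplex.exactAt_iff' _ n (n + 1) (n + 2) (by simp) (by simp),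
      ShortComplex.moduleCat_exact_iff]
    rfl
  rw [exact_iff]
  constructor
  · refine fun hP ↦ subsingleton_of_forall_eq 0 fun e ↦ ?_
    obtain ⟨f, hf, rfl⟩ := P.extMk_surjective e (n + 2) rfl
    exact (P.extMk_eq_zero_iff f _ rfl hf n rfl).2 (hP f hf)
  · intro _ f hf
    exact (P.extMk_eq_zero_iff f _ rfl hf n rfl).1 (Subsingleton.elim _ _)

end AbelianCategory

variable {A : Type} [Ring A] {M N X Y : ModuleCat.{0} A} {k n d : ℕ}

lemma subsingleton_ext_prod (X Y : ModuleCat.{0} A)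
    [Subsingleton (Abelian.Ext X N n)] [Subsingleton (Abelian.Ext Y N n)] :
    Subsingleton (Abelian.Ext (ModuleCat.of A (X × Y)) N n) :=
  (subsingleton_ext_iff_of_iso (ModuleCat.biprodIsoProd X Y)).1
    Abelian.Ext.biprodAddEquiv.subsingleton

lemma subsingleton_ext_pi {ι : Type} [Finite ι] (X : ι → ModuleCat.{0} A)
    [∀ i, Subsingleton (Abelian.Ext (X i) N n)] :
    Subsingleton (Abelian.Ext (ModuleCat.of A (∀ i, X i)) N n) := by
  have := Fintype.ofFinite ι
  exact (subsingleton_ext_iff_of_iso (ModuleCat.biproductIsoPi X)).1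
    (Abelian.Ext.biproductAddEquiv (biproduct.isBilimit X) N n).subsingleton

lemma InAdd.subsingleton_ext (h : InAdd A X Y) [Subsingleton (Abelian.Ext Y N n)] :
    Subsingleton (Abelian.Ext X N n) := by
  obtain ⟨m, i, r, hir⟩ := h
  have := subsingleton_ext_pi (N := N) (n := n) fun _ : Fin m ↦ Y
  exact subsingleton_ext_of_retract ⟨i, r, hir⟩

lemma IsSyzygyOf.subsingleton_ext_iff (h : IsSyzygyOf A M X) :
    Subsingleton (Abelian.Ext M N (k + 2)) ↔ Subsingleton (Abelian.Ext X N (k + 1)) := by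
  obtain ⟨P, f, ⟨_, _, -⟩, ⟨i⟩⟩ := h
  have hS : (ShortComplex.mk (kernel.ι f) f (kernel.condition f)).ShortExact :=
    { exact := ShortComplex.exact_kernel f }
  exact (subsingleton_ext_X₃_iff_X₁ hS).trans (subsingleton_ext_iff_of_iso i.symm)

lemma IsNthSyzygy.subsingleton_ext_iff (h : IsNthSyzygy A n M X) :
    Subsingleton (Abelian.Ext M N (k + n + 1)) ↔ Subsingleton (Abelian.Ext X N (k + 1)) := by
  induction n generalizing M with
  | zero =>
    obtain ⟨i⟩ := h
    exact subsingleton_ext_iff_of_iso i.symm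
  | succ n ih =>
    obtain ⟨Y, hY, hX⟩ := h
    exact hY.subsingleton_ext_iff.trans (ih hX)

lemma InjDimLE.hasInjectiveDimensionLE (h : InjDimLE A n N) : HasInjectiveDimensionLE N n := by
  induction h with
  | zero => infer_instance
  | succ n N I f _ _ _ ih =>
    have hS : (ShortComplex.mk f (cokernel.π f) (cokernel.condition f)).ShortExact :=
      { exact := ShortComplex.exact_cokernel f }
    exact hS.hasInjectiveDimensionLT_X₁ (n + 1) ih
      (hasInjectiveDimensionLT_of_ge I 1 (n + 2) (by lia))

lemma hasInjectiveDimensionLE_of_injDim_le (h : injDim A N ≤ d) : HasInjectiveDimensionLE N d := by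
  have hne : {x : ℕ∞ | ∃ n : ℕ, x = n ∧ InjDimLE A n N}.Nonempty := by
    by_contra! hempty
    rw [injDim, hempty, sInf_empty, top_le_iff] at h
    exact ENat.natCast_ne_top d h
  obtain ⟨n, hn, hN⟩ := csInf_mem hne
  have hnd : n ≤ d := by exact_mod_cast hn.symm.trans_le h
  have := hN.hasInjectiveDimensionLE
  exact hasInjectiveDimensionLT_of_ge N (n + 1) (d + 1) (by lia)

lemma DelLE.subsingleton_ext (h : DelLE A n M) (hnd : n < d) [HasInjectiveDimensionLE N d] :
    Subsingleton (Abelian.Ext M N d) := by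
  obtain ⟨k, rfl⟩ : ∃ k, d = k + n + 1 := ⟨d - n - 1, by lia⟩
  obtain ⟨X, hX, M', -, X', hX', hadd⟩ := h
  have ext_M' : Subsingleton (Abelian.Ext M' N (k + (n + 1) + 1)) :=
    HasInjectiveDimensionLT.subsingleton N (k + n + 1 + 1) _ le_rfl M'
  have ext_X' : Subsingleton (Abelian.Ext X' N (k + 1)) := hX'.subsingleton_ext_iff.1 ext_M'
  have ext_A : Subsingleton (Abelian.Ext (ModuleCat.of A A) N (k + 1)) :=
    Abelian.Ext.subsingleton_of_projective _ _ _
  have ext_prod : Subsingleton (Abelian.Ext (ModuleCat.of A (A × X')) N (k + 1)) :=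
    subsingleton_ext_prod (.of A A) X'
  exact hX.subsingleton_ext_iff.2 hadd.subsingleton_ext

end ArtinAlg

open ArtinAlg in
theorem statement_0_general (A : Type) [Ring A] (M N : ModuleCat.{0} A) (d : ℕ)
    (hN : injDim A N ≤ d)
    (hExt : Nontrivial ↥(((Ext ℤ (ModuleCat.{0} A) d).obj (Opposite.op M)).obj N)) :
    (d : ℕ∞) ≤ delLevel A M := by
  refine le_sInf ?_
  rintro _ ⟨n, rfl, hn⟩
  rw [Nat.cast_le]
  by_contra! hlt
  have := hasInjectiveDimensionLE_of_injDim_le hN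
  have hvan : Subsingleton (Abelian.Ext M N d) := hn.subsingleton_ext hlt
  obtain ⟨p, rfl⟩ := Nat.exists_eq_add_one_of_ne_zero (Nat.ne_zero_of_lt hlt)
  exact not_subsingleton _ ((subsingleton_derived_ext_succ_iff (R := ℤ) M N p).2 hvan)

open ArtinAlg in
/-- Let `A` be an artin algebra and `M` a finitely generated `A`-module.
If there exists a (not necessarily finitely generated) module `N` of finite injective
dimension `d ≥ 1` such that `Ext^d(M, N) ≠ 0`, then `d ≤ del M`. -/
theorem statement_0 (R : Type) [CommRing R] [IsArtinianRing R]
    (A : Type) [Ring A] [Algebra R A] [Module.Finite R A]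
    (M : ModuleCat.{0} A) (hM : Module.Finite A ↥M)
    (d : ℕ) (hd : 1 ≤ d) (N : ModuleCat.{0} A) (hN : injDim A N = d)
    (hExt : Nontrivial ↥(((Ext ℤ (ModuleCat.{0} A) d).obj (Opposite.op M)).obj N)) :
    (d : ℕ∞) ≤ delLevel A M := by
  exact statement_0_general A M N d hN.le hExt
end
end

section
/- Let A be an artin algebra. If X is a submodule of a finitely generated module Y, then del X ≤ pd Y. -/
open CategoryTheory CategoryTheory.Limits

noncomputable section

/-!
Put `Z = Y / X`. Given surjections from projectives `P` and `Q` onto `X` and `Z`, the horseshoe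
construction gives a surjection `P × Q → Y` and a short exact sequence
`0 → Ω X → ker (P × Q → Y) → Ω Z → 0`, whose middle term has projective dimension at most `n - 1`
if `Y` has projective dimension at most `n`. After `n` such steps the middle term is projective,
and Schanuel's lemma for the two presentations of `Ω^n Z` gives `Ω^n X ⊕ Q' ≅ Ω^(n+1) Z ⊕ P'` with
`P'` and `Q'` finitely generated projective.
-/

namespace ArtinAlg

section Exact

variable {A X Y Z P Q K L : Type*} [Ring A]
  [AddCommGroup X] [Module A X] [AddCommGroup Y] [Module A Y] [AddCommGroup Z] [Module A Z]
  [AddCommGroup P] [Module A P] [AddCommGroup Q] [Module A Q]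
  [AddCommGroup K] [Module A K] [AddCommGroup L] [Module A L]

theorem surjective_coprod_of_exact {f : X →ₗ[A] Y} {g : Y →ₗ[A] Z} {p : P →ₗ[A] X}
    {s : Q →ₗ[A] Y} (hfg : Function.Exact f g) (hp : Function.Surjective p)
    (hs : Function.Surjective (g ∘ₗ s)) : Function.Surjective ((f ∘ₗ p).coprod s) := by
  intro y
  obtain ⟨b, hb : g (s b) = g y⟩ := hs (g y)
  obtain ⟨x, hx⟩ := (hfg (y - s b)).1 (by rw [map_sub, hb, sub_self])
  obtain ⟨a, rfl⟩ := hp x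
  exact ⟨(a, b), by simp [hx]⟩

theorem exists_exact_ker_coprod {f : X →ₗ[A] Y} {g : Y →ₗ[A] Z} {i : K →ₗ[A] P} {p : P →ₗ[A] X}
    {j : L →ₗ[A] Q} {s : Q →ₗ[A] Y} (hf : Function.Injective f) (hfg : Function.Exact f g)
    (hi : Function.Injective i) (hip : Function.Exact i p) (hp : Function.Surjective p)
    (hj : Function.Injective j) (hjs : Function.Exact j (g ∘ₗ s)) :
    ∃ (F : K →ₗ[A] LinearMap.ker ((f ∘ₗ p).coprod s))
      (G : LinearMap.ker ((f ∘ₗ p).coprod s) →ₗ[A] L),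
      Function.Injective F ∧ Function.Exact F G ∧ Function.Surjective G := by
  have mem_ker (x : P × Q) : x ∈ LinearMap.ker ((f ∘ₗ p).coprod s) ↔ f (p x.1) + s x.2 = 0 := by
    simp
  have snd_mem_range (x : LinearMap.ker ((f ∘ₗ p).coprod s)) : x.1.2 ∈ LinearMap.range j := by
    refine (hjs _).1 ?_
    have := congrArg g ((mem_ker x.1).1 x.2)
    rwa [map_add, hfg.apply_apply_eq_zero, zero_add, map_zero] at this
  let F : K →ₗ[A] LinearMap.ker ((f ∘ₗ p).coprod s) :=
    (LinearMap.inl A P Q ∘ₗ i).codRestrict _ fun k ↦ by simp [hip.apply_apply_eq_zero]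
  let G : LinearMap.ker ((f ∘ₗ p).coprod s) →ₗ[A] L :=
    (LinearEquiv.ofInjective j hj).symm ∘ₗ
      (LinearMap.snd A P Q ∘ₗ Submodule.subtype _).codRestrict _ snd_mem_range
  have j_comp_G (x) : j (G x) = x.1.2 := LinearEquiv.ofInjective_symm_apply (h := hj) _ _
  refine ⟨F, G, fun a b h ↦ hi (congrArg (fun x ↦ x.1.1) h), fun x ↦ ⟨fun hx ↦ ?_, ?_⟩, fun l ↦ ?_⟩
  · have h2 : x.1.2 = 0 := by rw [← j_comp_G, hx, map_zero]
    have h1 : p x.1.1 = 0 := hf <| by simpa [h2] using (mem_ker x.1).1 x.2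
    obtain ⟨k, hk⟩ := (hip _).1 h1
    exact ⟨k, Subtype.ext (Prod.ext hk h2.symm)⟩
  · rintro ⟨k, rfl⟩
    exact hj (by rw [j_comp_G, map_zero]; rfl)
  · obtain ⟨x, hx⟩ := (hfg (s (j l))).1 (hjs.apply_apply_eq_zero l)
    obtain ⟨a, rfl⟩ := hp x
    exact ⟨⟨(-a, j l), by simp [hx]⟩, hj (j_comp_G _)⟩

theorem nonempty_linearEquiv_prod_of_exact [Module.Projective A Z] {f : X →ₗ[A] Y}
    {g : Y →ₗ[A] Z} (hf : Function.Injective f) (hfg : Function.Exact f g)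
    (hg : Function.Surjective g) : Nonempty (Y ≃ₗ[A] X × Z) := by
  obtain ⟨s, hs⟩ := Module.projective_lifting_property g .id hg
  exact ⟨(hfg.splitSurjectiveEquiv hf ⟨s, hs⟩).1⟩

theorem nonempty_ker_coprod_linearEquiv_prod [Module.Projective A Q] {i : K →ₗ[A] P}
    {p : P →ₗ[A] X} (q : Q →ₗ[A] X) (hi : Function.Injective i) (hip : Function.Exact i p)
    (hp : Function.Surjective p) : Nonempty (LinearMap.ker (p.coprod q) ≃ₗ[A] K × Q) := by
  -- The horseshoe over the exact sequence `0 → X → X → 0 → 0`.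
  obtain ⟨F, G, hF, hFG, hG⟩ := exists_exact_ker_coprod (f := LinearMap.id)
    (g := (0 : X →ₗ[A] X)) (j := LinearMap.id) (s := q) Function.injective_id
    (fun x ↦ by simp) hi hip hp Function.injective_id (fun x ↦ by simp)
  exact nonempty_linearEquiv_prod_of_exact hF hFG hG

theorem schanuel [Module.Projective A P] [Module.Projective A Q]
    {i : K →ₗ[A] P} {p : P →ₗ[A] X} {j : L →ₗ[A] Q} {q : Q →ₗ[A] X}
    (hi : Function.Injective i) (hip : Function.Exact i p) (hp : Function.Surjective p)
    (hj : Function.Injective j) (hjq : Function.Exact j q) (hq : Function.Surjective q) :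
    Nonempty ((K × Q) ≃ₗ[A] (L × P)) := by
  obtain ⟨e⟩ := nonempty_ker_coprod_linearEquiv_prod q hi hip hp
  obtain ⟨e'⟩ := nonempty_ker_coprod_linearEquiv_prod p hj hjq hq
  have ker_comap_swap : LinearMap.ker (p.coprod q) =
      (LinearMap.ker (q.coprod p)).comap (LinearEquiv.prodComm A P Q).toLinearMap := by
    ext x
    simp [add_comm]
  exact ⟨e.symm ≪≫ₗ LinearEquiv.ofEq _ _ ker_comap_swap ≪≫ₗ
    (LinearEquiv.prodComm A P Q).ofSubmodule' _ ≪≫ₗ e'⟩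

end Exact

section ProjectiveCover

variable {A : Type*} [Ring A] {P M L : Type*} [AddCommGroup P] [Module A P]
  [AddCommGroup M] [Module A M] [AddCommGroup L] [Module A L]

theorem exists_projective_le_range_of_comp_eq [IsArtinian A P] [IsNoetherian A P]
    [Module.Projective A P] {f : P →ₗ[A] M} (φ : Module.End A P) (hφ : f ∘ₗ φ = f) :
    ∃ N ≤ LinearMap.range φ, Module.Projective A N ∧ N.map f = LinearMap.range f := by
  have comp_pow (k : ℕ) : f ∘ₗ (φ ^ k) = f := by
    induction k with
    | zero => rfl
    | succ k ih => rw [pow_succ, Module.End.mul_eq_comp, ← LinearMap.comp_assoc, ih, hφ]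
  obtain ⟨k, hk⟩ := Filter.eventually_atTop.1 φ.eventually_isCompl_ker_pow_range_pow
  have fitting := (hk (k + 1) k.le_succ).symm
  refine ⟨LinearMap.range (φ ^ (k + 1)), ?_,
    .of_split _ _ (Submodule.projectionOnto_comp_subtype fitting), ?_⟩
  · rw [pow_succ', Module.End.mul_eq_comp]
    exact LinearMap.range_comp_le_range _ _
  · rw [← LinearMap.range_comp, comp_pow]

theorem surjective_of_surjective_comp_of_minimal [IsArtinian A P] [IsNoetherian A P]
    [Module.Projective A P] {f : P →ₗ[A] M} {g : L →ₗ[A] P}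
    (hmin : ∀ N : Submodule A P, Module.Projective A N → N.map f = ⊤ → N = ⊤)
    (hfg : Function.Surjective (f ∘ₗ g)) : Function.Surjective g := by
  obtain ⟨t, ht⟩ := Module.projective_lifting_property (f ∘ₗ g) f hfg
  obtain ⟨N, hN, hNproj, hNf⟩ := exists_projective_le_range_of_comp_eq (g ∘ₗ t) ht
  have hf : LinearMap.range f = ⊤ := LinearMap.range_eq_top.2 (.of_comp hfg)
  have hN_top : N = ⊤ := hmin N hNproj (hNf.trans hf)
  have hgt : Function.Surjective (g ∘ₗ t) :=
    LinearMap.range_eq_top.1 (top_le_iff.1 (hN_top ▸ hN))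
  exact .of_comp hgt

theorem exists_minimal_projective_submodule [IsArtinian A P] [Module.Projective A P]
    {f : P →ₗ[A] M} (hf : Function.Surjective f) :
    ∃ N : Submodule A P, Module.Projective A N ∧ N.map f = ⊤ ∧ ∀ N' : Submodule A N,
      Module.Projective A N' → N'.map (f ∘ₗ N.subtype) = ⊤ → N' = ⊤ := by
  obtain ⟨N, ⟨hN, hNf⟩, hmin⟩ := exists_minimal_of_wellFoundedLT
    (fun N : Submodule A P ↦ Module.Projective A N ∧ N.map f = ⊤)
    ⟨⊤, .of_equiv Submodule.topEquiv.symm, by rw [Submodule.map_top, LinearMap.range_eq_top.2 hf]⟩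
  refine ⟨N, hN, hNf, fun N' hN' hN'f ↦ ?_⟩
  have hproj : Module.Projective A (N'.map N.subtype) :=
    .of_equiv (N'.equivMapOfInjective N.subtype N.subtype_injective)
  have hle : N ≤ N'.map N.subtype :=
    hmin ⟨hproj, by rwa [← Submodule.map_comp]⟩ (Submodule.map_subtype_le N N')
  exact Submodule.map_injective_of_injective N.subtype_injective
    (((Submodule.map_subtype_le N N').antisymm hle).trans (Submodule.map_subtype_top N).symm)

end ProjectiveCover

section Syzygy

variable {A : Type} [Ring A]

theorem exists_isProjectiveCoverHom [IsArtinianRing A] (M : ModuleCat.{0} A) [Module.Finite A M] :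
    ∃ (P : ModuleCat.{0} A) (f : P ⟶ M), IsProjectiveCoverHom A f := by
  obtain ⟨n, f, hf⟩ := Module.Finite.exists_fin' A M
  obtain ⟨N, hN, hNf, hmin⟩ := exists_minimal_projective_submodule hf
  refine ⟨.of A N, ModuleCat.ofHom (f ∘ₗ N.subtype), (IsProjective.iff_projective N).1 hN, ?_, ?_⟩
  · rw [ModuleCat.epi_iff_range_eq_top]
    simpa [LinearMap.range_comp] using hNf
  · intro L g hg
    rw [ModuleCat.epi_iff_surjective] at hg ⊢
    exact surjective_of_surjective_comp_of_minimal hmin hg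

theorem IsProjectiveCoverHom.finite {P M : ModuleCat.{0} A} [Module.Finite A M] {f : P ⟶ M}
    (hf : IsProjectiveCoverHom A f) : Module.Finite A P := by
  obtain ⟨-, hepi, hsuperfluous⟩ := hf
  obtain ⟨n, h, hh⟩ := Module.Finite.exists_fin' A M
  obtain ⟨g, hg⟩ :=
    Module.projective_lifting_property f.hom h ((ModuleCat.epi_iff_surjective f).1 hepi)
  have hepi_comp : Epi (ModuleCat.ofHom g ≫ f) :=
    (ModuleCat.epi_iff_surjective _).2 (hg ▸ hh : Function.Surjective (f.hom ∘ₗ g))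
  exact .of_surjective g ((ModuleCat.epi_iff_surjective _).1 (hsuperfluous _ _ hepi_comp))

theorem IsSyzygyOf.exists_exact {M X : ModuleCat.{0} A} [Module.Finite A M]
    (h : IsSyzygyOf A M X) :
    ∃ (P : ModuleCat.{0} A) (i : X →ₗ[A] P) (p : P →ₗ[A] M), Module.Finite A P ∧
      Module.Projective A P ∧ Function.Injective i ∧ Function.Exact i p ∧
      Function.Surjective p := by
  obtain ⟨P, f, hf, ⟨e⟩⟩ := h
  let e' : X ≃ₗ[A] LinearMap.ker f.hom := (e ≪≫ ModuleCat.kernelIsoKer f).toLinearEquiv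
  exact ⟨P, (LinearMap.ker f.hom).subtype ∘ₗ e', f.hom, hf.finite,
    (IsProjective.iff_projective P).2 hf.1, (Submodule.subtype_injective _).comp e'.injective,
    (e'.surjective.comp_exact_iff_exact).2 f.hom.exact_subtype_ker_map,
    (ModuleCat.epi_iff_surjective f).1 hf.2.1⟩

theorem IsSyzygyOf.finite [IsNoetherianRing A] {M X : ModuleCat.{0} A} [Module.Finite A M]
    (h : IsSyzygyOf A M X) : Module.Finite A X := by
  obtain ⟨P, i, p, _, -, hi, -⟩ := h.exists_exact
  exact .of_injective i hi

theorem exists_isNthSyzygy [IsArtinianRing A] (n : ℕ) (M : ModuleCat.{0} A) [Module.Finite A M] :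
    ∃ X, IsNthSyzygy A n M X := by
  induction n generalizing M with
  | zero => exact ⟨M, ⟨Iso.refl M⟩⟩
  | succ n ih =>
    obtain ⟨P, f, hf⟩ := exists_isProjectiveCoverHom M
    have hΩ : IsSyzygyOf A M (kernel f) := ⟨P, f, hf, ⟨Iso.refl _⟩⟩
    have := hΩ.finite
    obtain ⟨X, hX⟩ := ih (kernel f)
    exact ⟨X, kernel f, hΩ, hX⟩

theorem ProjDimLE.hasProjectiveDimensionLT {n : ℕ} {M : ModuleCat.{0} A} (h : ProjDimLE A n M) :
    HasProjectiveDimensionLT M (n + 1) := by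
  induction h with
  | zero M h => exact projective_iff_hasProjectiveDimensionLT_one.1 h
  | succ n M P f hP hf _ ih =>
    have hS : (ShortComplex.mk (kernel.ι f) f (kernel.condition f)).ShortExact :=
      { exact := ShortComplex.exact_of_f_is_kernel _ (kernelIsKernel f) }
    exact (hS.hasProjectiveDimensionLT_X₃_iff n hP).2 ih

end Syzygy

section StableIso

variable {A : Type} [Ring A]

/-- `M` and `N` are stably isomorphic: they become isomorphic after adding finitely generated
projective modules. -/
def IsStablyIso (M N : ModuleCat.{0} A) : Prop :=
  ∃ P Q : ModuleCat.{0} A, Module.Finite A P ∧ Module.Projective A P ∧ Module.Finite A Q ∧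
    Module.Projective A Q ∧ Nonempty ((M × P) ≃ₗ[A] (N × Q))

theorem exists_exact_of_isSyzygyOf [IsNoetherianRing A] {n : ℕ} {X Y Z X₁ Z₁ : ModuleCat.{0} A}
    [Module.Finite A X] [Module.Finite A Z] {f : X →ₗ[A] Y} {g : Y →ₗ[A] Z}
    (hf : Function.Injective f) (hfg : Function.Exact f g) (hg : Function.Surjective g)
    (hY : HasProjectiveDimensionLT Y (n + 2)) (hX₁ : IsSyzygyOf A X X₁) (hZ₁ : IsSyzygyOf A Z Z₁) :
    ∃ (Y₁ : ModuleCat.{0} A) (F : X₁ →ₗ[A] Y₁) (G : Y₁ →ₗ[A] Z₁), Module.Finite A Y₁ ∧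
      HasProjectiveDimensionLT Y₁ (n + 1) ∧ Function.Injective F ∧ Function.Exact F G ∧
      Function.Surjective G := by
  obtain ⟨P, i, p, _, _, hi, hip, hp⟩ := hX₁.exists_exact
  obtain ⟨Q, j, q, _, _, hj, hjq, hq⟩ := hZ₁.exists_exact
  obtain ⟨s, rfl⟩ := Module.projective_lifting_property g q hg
  obtain ⟨F, G, hF, hFG, hG⟩ := exists_exact_ker_coprod hf hfg hi hip hp hj hjq
  have hshort := LinearMap.shortExact_shortComplexKer (surjective_coprod_of_exact hfg hp hq)
  have hPQ : Projective (ModuleCat.of A (P × Q)) :=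
    (IsProjective.iff_projective (P × Q)).1 inferInstance
  exact ⟨.of A (LinearMap.ker ((f ∘ₗ p).coprod s)), F, G,
    inferInstanceAs (Module.Finite A (LinearMap.ker ((f ∘ₗ p).coprod s))),
    (hshort.hasProjectiveDimensionLT_X₃_iff n hPQ).1 hY, hF, hFG, hG⟩

theorem isStablyIso_of_isNthSyzygy [IsNoetherianRing A] {n : ℕ} {X Y Z X' Z' : ModuleCat.{0} A}
    [Module.Finite A Y] {f : X →ₗ[A] Y} {g : Y →ₗ[A] Z} (hf : Function.Injective f)
    (hfg : Function.Exact f g) (hg : Function.Surjective g)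
    (hY : HasProjectiveDimensionLT Y (n + 1)) (hX' : IsNthSyzygy A n X X')
    (hZ' : IsNthSyzygy A (n + 1) Z Z') : IsStablyIso X' Z' := by
  have : Module.Finite A X := .of_injective f hf
  have : Module.Finite A Z := .of_surjective g hg
  obtain ⟨Z₁, hZ₁, hZ'⟩ := hZ'
  induction n generalizing X Y Z Z₁ with
  | zero =>
    obtain ⟨eX⟩ := hX'
    obtain ⟨eZ⟩ := hZ'
    obtain ⟨Q, j, q, _, _, hj, hjq, hq⟩ := hZ₁.exists_exact
    have : Module.Projective A Y :=
      (IsProjective.iff_projective Y).2 (projective_iff_hasProjectiveDimensionLT_one.2 hY)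
    obtain ⟨e⟩ := schanuel hf hfg hg hj hjq hq
    exact ⟨Q, Y, ‹_›, ‹_›, ‹_›, ‹_›, ⟨eX.toLinearEquiv.prodCongr (.refl A Q) ≪≫ₗ e ≪≫ₗ
      eZ.symm.toLinearEquiv.prodCongr (.refl A Y)⟩⟩
  | succ n ih =>
    obtain ⟨X₁, hX₁, hX'⟩ := hX'
    obtain ⟨Z₂, hZ₂, hZ'⟩ := hZ'
    obtain ⟨Y₁, F, G, _, hY₁, hF, hFG, hG⟩ := exists_exact_of_isSyzygyOf hf hfg hg hY hX₁ hZ₁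
    exact ih hF hFG hG hY₁ hX' hX₁.finite hZ₁.finite Z₂ hZ₂ hZ'

theorem IsDirectSummandOf.trans {X Y Z : ModuleCat.{0} A} (hXY : IsDirectSummandOf A X Y)
    (hYZ : IsDirectSummandOf A Y Z) : IsDirectSummandOf A X Z := by
  obtain ⟨i, r, hir⟩ := hXY
  obtain ⟨j, s, hjs⟩ := hYZ
  exact ⟨i ≫ j, s ≫ r, by rw [Category.assoc, ← Category.assoc j, hjs, Category.id_comp, hir]⟩

theorem isDirectSummandOf_prod_pi (M : ModuleCat.{0} A) (n : ℕ) :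
    IsDirectSummandOf A (.of A (M × (Fin n → A))) (.of A (Fin (n + 1) → A × M)) := by
  let e : ((A × M) × (Fin n → A × M)) ≃ₗ[A] (Fin (n + 1) → A × M) :=
    Fin.consLinearEquiv A fun _ ↦ A × M
  let i : M × (Fin n → A) →ₗ[A] (A × M) × (Fin n → A × M) :=
    (LinearMap.inr A A M).prodMap ((LinearMap.inl A A M).compLeft (Fin n))
  let r : (A × M) × (Fin n → A × M) →ₗ[A] M × (Fin n → A) :=
    (LinearMap.snd A A M).prodMap ((LinearMap.fst A A M).compLeft (Fin n))
  refine ⟨ModuleCat.ofHom (e ∘ₗ i), ModuleCat.ofHom (r ∘ₗ e.symm), ?_⟩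
  exact ModuleCat.hom_ext (LinearMap.ext fun x ↦ congrArg r (e.symm_apply_apply (i x)))

theorem IsStablyIso.inAdd {M N : ModuleCat.{0} A} (h : IsStablyIso M N) :
    InAdd A M (.of A (A × N)) := by
  obtain ⟨P, Q, -, -, _, _, ⟨e⟩⟩ := h
  obtain ⟨n, t, s, -, -, hts⟩ := Module.Finite.exists_comp_eq_id_of_projective A Q
  have hMNQ : IsDirectSummandOf A M (.of A (N × Q)) := by
    refine ⟨ModuleCat.ofHom (e ∘ₗ .inl A M P), ModuleCat.ofHom (.fst A M P ∘ₗ e.symm), ?_⟩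
    ext x
    exact congrArg Prod.fst (e.symm_apply_apply (x, 0))
  have hNQ : IsDirectSummandOf A (.of A (N × Q)) (.of A (N × (Fin n → A))) := by
    refine ⟨ModuleCat.ofHom (.prodMap .id s), ModuleCat.ofHom (.prodMap .id t), ?_⟩
    exact ModuleCat.hom_ext (LinearMap.ext fun x ↦ Prod.ext rfl (LinearMap.congr_fun hts x.2))
  exact ⟨n + 1, (hMNQ.trans hNQ).trans (isDirectSummandOf_prod_pi N n)⟩

theorem ProjDimLE.delLE_of_mono [IsArtinianRing A] {n : ℕ} {X Y : ModuleCat.{0} A}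
    [Module.Finite A Y] (hY : ProjDimLE A n Y) (f : X ⟶ Y) [Mono f] : DelLE A n X := by
  have hf : Function.Injective f.hom := (ModuleCat.mono_iff_injective f).1 inferInstance
  have : Module.Finite A X := .of_injective f.hom hf
  let Z : ModuleCat.{0} A := .of A (Y ⧸ LinearMap.range f.hom)
  have : Module.Finite A Z := inferInstanceAs (Module.Finite A (Y ⧸ LinearMap.range f.hom))
  obtain ⟨X', hX'⟩ := exists_isNthSyzygy n X
  obtain ⟨Z', hZ'⟩ := exists_isNthSyzygy (n + 1) Z
  have hX'Z' : IsStablyIso X' Z' :=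
    isStablyIso_of_isNthSyzygy hf (LinearMap.exact_map_mkQ_range f.hom)
      (Submodule.mkQ_surjective _) hY.hasProjectiveDimensionLT hX' hZ'
  exact ⟨X', hX', Z, ‹_›, Z', hZ', hX'Z'.inAdd⟩

end StableIso

end ArtinAlg

open ArtinAlg in
theorem statement_2_general (A : Type) [Ring A] [IsArtinianRing A] (X Y : ModuleCat.{0} A)
    [Module.Finite A Y] (f : X ⟶ Y) [Mono f] : delLevel A X ≤ projDim A Y := by
  refine le_sInf ?_
  rintro _ ⟨n, rfl, hY⟩
  exact sInf_le ⟨n, rfl, hY.delLE_of_mono f⟩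

open ArtinAlg in
/-- Let `A` be an artin algebra. If `X` is a submodule of a finitely
generated module `Y`, then `del X ≤ pd Y`. -/
theorem statement_2 (R : Type) [CommRing R] [IsArtinianRing R]
    (A : Type) [Ring A] [Algebra R A] [Module.Finite R A]
    (X Y : ModuleCat.{0} A) (hY : Module.Finite A ↥Y)
    (f : X ⟶ Y) (hf : CategoryTheory.Mono f) :
    delLevel A X ≤ projDim A Y := by
  have : IsArtinianRing A := isArtinian_of_tower R inferInstance
  exact statement_2_general A X Y f
end
end
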